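/- Let p be a prime, let M be a Lie algebra over ℚ_p, let L ⊆ M be a ℤ_p-Lie subalgebra which is nilpotent of nilpotency class c ≥ 1, and let I be a Lie ideal of L. Define L̂ = L + p^{-1}·γ_2(L) + ⋯ + p^{-(c-1)}·γ_c(L) and Î = I + p^{-1}·[I,L] + p^{-2}·[I,L,L] + ⋯ + p^{-(c-1)}·[I, _{c-1}L], both as ℤ_p-submodules of M. Then ⁅Î, L̂⁆ ⊆ p·Î; in particular, Î is a Lie ideal of L̂. -/

import Mathlib

/-!
Write `G j = γ_{j+1}(L)` and `I i = [I, _i L]`. The Jacobi identity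
`⁅x, ⁅g, l⁆⁆ = ⁅⁅x, g⁆, l⁆ - ⁅⁅x, l⁆, g⁆` gives, by induction on `j`, that
`⁅I i, G j⁆ ⊆ I (i + j + 1)` (`lie_mem_leftIter`). Hence
`⁅p⁻ⁱ • I i, p⁻ʲ • G j⁆ ⊆ p • (p^{-(i+j+1)} • I (i + j + 1))`. When `i + j + 1 < c` the right-hand
side is `p` times a summand of `Î`; otherwise it vanishes, since `I k ≤ G k` and `G k = 0` for
`c ≤ k`. Bilinearity of the bracket then gives `⁅Î, L̂⁆ ⊆ p • Î`.
-/

open Pointwise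

/-- For `Z_p`-submodules `A B` of `M`, the `Z_p`-submodule spanned by brackets `⁅x, y⁆` with
`x ∈ A`, `y ∈ B`. -/
def bracketSpan (R M : Type*) [CommRing R] [LieRing M] [Module R M]
    (A B : Submodule R M) : Submodule R M :=
  Submodule.span R {z : M | ∃ x ∈ A, ∃ y ∈ B, z = ⁅x, y⁆}

/-- The lower central series of a submodule `S` closed under the bracket:
`gammaS R M S (i - 1)` is `γ_i(S)`, i.e. `gammaS R M S 0 = S = γ_1(S)` and
`gammaS R M S i = γ_{i+1}(S) = ⁅γ_i(S), S⁆`. -/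
def gammaS (R M : Type*) [CommRing R] [LieRing M] [Module R M]
    (S : Submodule R M) : ℕ → Submodule R M
  | 0 => S
  | i + 1 => bracketSpan R M (gammaS R M S i) S

/-- The left-normed iterated bracket: `leftIter R M I S i = [I, S, …, S]` with `i` copies
of `S`. -/
def leftIter (R M : Type*) [CommRing R] [LieRing M] [Module R M]
    (I S : Submodule R M) : ℕ → Submodule R M
  | 0 => I
  | i + 1 => bracketSpan R M (leftIter R M I S i) S

/-- `LhatDef p M L c = L + p⁻¹·γ_2(L) + p⁻²·γ_3(L) + ⋯ + p^{-(c-1)}·γ_c(L)` as a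
`ℤ_[p]`-submodule of `M`. -/
noncomputable def LhatDef (p : ℕ) [Fact p.Prime] (M : Type*) [LieRing M]
    [LieAlgebra ℚ_[p] M] [Module ℤ_[p] M] [IsScalarTower ℤ_[p] ℚ_[p] M]
    (L : Submodule ℤ_[p] M) (c : ℕ) : Submodule ℤ_[p] M :=
  ⨆ i ∈ Finset.range c, (((p : ℚ_[p]) ^ i)⁻¹) • gammaS ℤ_[p] M L i

/-- `IhatDef p M I L c = I + p⁻¹·[I,L] + p⁻²·[I,L,L] + ⋯ + p^{-(c-1)}·[I, _(c-1) L]` as a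
`ℤ_[p]`-submodule of `M`. -/
noncomputable def IhatDef (p : ℕ) [Fact p.Prime] (M : Type*) [LieRing M]
    [LieAlgebra ℚ_[p] M] [Module ℤ_[p] M] [IsScalarTower ℤ_[p] ℚ_[p] M]
    (I L : Submodule ℤ_[p] M) (c : ℕ) : Submodule ℤ_[p] M :=
  ⨆ i ∈ Finset.range c, (((p : ℚ_[p]) ^ i)⁻¹) • leftIter ℤ_[p] M I L i

section Helpers

variable {R M : Type*} [CommRing R] [LieRing M] [Module R M]

theorem lie_mem_bracketSpan {A B : Submodule R M} {x y : M} (hx : x ∈ A) (hy : y ∈ B) :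
    ⁅x, y⁆ ∈ bracketSpan R M A B :=
  Submodule.subset_span ⟨x, hx, y, hy, rfl⟩

theorem bracketSpan_mono_left {A A' : Submodule R M} (B : Submodule R M) (h : A ≤ A') :
    bracketSpan R M A B ≤ bracketSpan R M A' B := by
  refine Submodule.span_mono ?_
  rintro _ ⟨x, hx, y, hy, rfl⟩
  exact ⟨x, h hx, y, hy, rfl⟩

theorem leftIter_le_gammaS {I L : Submodule R M} (hIL : I ≤ L) (i : ℕ) :
    leftIter R M I L i ≤ gammaS R M L i := by
  induction i with
  | zero => exact hIL
  | succ i ih => exact bracketSpan_mono_left L ih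

theorem gammaS_eq_bot {L : Submodule R M} {c : ℕ} (h : gammaS R M L c = ⊥) {k : ℕ}
    (hk : c ≤ k) : gammaS R M L k = ⊥ := by
  induction k, hk using Nat.le_induction with
  | base => exact h
  | succ k _ ih =>
    rw [eq_bot_iff]
    refine Submodule.span_le.2 ?_
    rintro _ ⟨x, hx, y, hy, rfl⟩
    rw [ih, Submodule.mem_bot] at hx
    simp [hx]

/-- `⁅[I, _i L], γ_{j+1}(L)⁆ ⊆ [I, _{i+j+1} L]`, by induction on `j` through the Jacobi identity.
Only the compatibility of the bracket with scalars on the right is needed. -/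
theorem lie_mem_leftIter (hsmul : ∀ (a : R) (x y : M), ⁅x, a • y⁆ = a • ⁅x, y⁆)
    (I L : Submodule R M) (j : ℕ) :
    ∀ i : ℕ, ∀ x ∈ leftIter R M I L i, ∀ y ∈ gammaS R M L j,
      ⁅x, y⁆ ∈ leftIter R M I L (i + j + 1) := by
  induction j with
  | zero => exact fun i x hx y hy => lie_mem_bracketSpan hx hy
  | succ j ih =>
    intro i x hx y hy
    induction hy using Submodule.span_induction with
    | mem y hy =>
      obtain ⟨g, hg, l, hl, rfl⟩ := hy
      have jac : ⁅x, ⁅g, l⁆⁆ = ⁅⁅x, g⁆, l⁆ - ⁅⁅x, l⁆, g⁆ := by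
        rw [leibniz_lie x g l, ← lie_skew ⁅x, l⁆ g]
        abel
      have h2 := ih (i + 1) _ (lie_mem_bracketSpan hx hl) g hg
      rw [show i + 1 + j + 1 = i + (j + 1) + 1 by omega] at h2
      rw [jac]
      exact Submodule.sub_mem _ (lie_mem_bracketSpan (ih i x hx g hg) hl) h2
    | zero => simp
    | add u v _ _ hu hv =>
      rw [lie_add]
      exact Submodule.add_mem _ hu hv
    | smul a u _ hu =>
      rw [hsmul]
      exact Submodule.smul_mem _ a hu

end Helpers

/-- Let `p` be a prime, `M` a Lie algebra over `ℚ_[p]`, `L ⊆ M` a `ℤ_[p]`-Lie subalgebra which is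
nilpotent of class `c ≥ 1`, and `I` a Lie ideal of `L`.  With
`L̂ = L + p⁻¹·γ_2(L) + ⋯ + p^{-(c-1)}·γ_c(L)` and
`Î = I + p⁻¹·[I,L] + ⋯ + p^{-(c-1)}·[I, _(c-1) L]`, one has `⁅Î, L̂⁆ ⊆ p·Î`; in particular
`Î` is a Lie ideal of `L̂`. -/
theorem Ihat_bracket_Lhat_le (p : ℕ) [Fact p.Prime] (M : Type*) [LieRing M]
    [LieAlgebra ℚ_[p] M] [Module ℤ_[p] M] [IsScalarTower ℤ_[p] ℚ_[p] M]
    (L : Submodule ℤ_[p] M) (hL : ∀ x ∈ L, ∀ y ∈ L, ⁅x, y⁆ ∈ L)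
    (c : ℕ) (hc : 1 ≤ c)
    (hnil : gammaS ℤ_[p] M L c = ⊥) (hcl : gammaS ℤ_[p] M L (c - 1) ≠ ⊥)
    (I : Submodule ℤ_[p] M) (hIL : I ≤ L)
    (hI : ∀ x ∈ L, ∀ y ∈ I, ⁅x, y⁆ ∈ I) :
    (∀ x ∈ IhatDef p M I L c, ∀ y ∈ LhatDef p M L c,
      ⁅x, y⁆ ∈ (p : ℤ_[p]) • IhatDef p M I L c) ∧
    IhatDef p M I L c ≤ LhatDef p M L c ∧
    (∀ x ∈ LhatDef p M L c, ∀ y ∈ IhatDef p M I L c, ⁅x, y⁆ ∈ IhatDef p M I L c) := by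
  have hcoe : ∀ (a : ℤ_[p]) (x : M), a • x = (a : ℚ_[p]) • x := fun a x =>
    (algebraMap_smul ℚ_[p] a x).symm
  have hsmul : ∀ (a : ℤ_[p]) (x y : M), ⁅x, a • y⁆ = a • ⁅x, y⁆ := fun a x y => by
    rw [hcoe, hcoe, lie_smul]
  have hp0 : (p : ℚ_[p]) ≠ 0 := Nat.cast_ne_zero.2 (Fact.out : p.Prime).ne_zero
  have hpI : (p : ℤ_[p]) • IhatDef p M I L c ≤ IhatDef p M I L c := by
    intro x hx
    obtain ⟨y, hy, rfl⟩ := (Submodule.mem_smul_pointwise_iff_exists _ _ _).1 hx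
    exact Submodule.smul_mem _ _ hy
  have main : ∀ x ∈ IhatDef p M I L c, ∀ y ∈ LhatDef p M L c,
      ⁅x, y⁆ ∈ (p : ℤ_[p]) • IhatDef p M I L c := by
    intro x hx y hy
    unfold LhatDef at hy
    induction hy using Submodule.iSup_induction' with
    | zero => simp
    | add u v _ _ hu hv =>
      rw [lie_add]
      exact Submodule.add_mem _ hu hv
    | mem j y hy =>
      by_cases hj : j ∈ Finset.range c
      swap
      · have hy0 : y = 0 := by simpa [hj] using hy
        simp [hy0]
      rw [iSup_pos hj] at hy
      obtain ⟨g, hg, rfl⟩ := (Submodule.mem_smul_pointwise_iff_exists _ _ _).1 hy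
      rw [IhatDef] at hx
      induction hx using Submodule.iSup_induction' with
      | zero => simp
      | add u v _ _ hu hv =>
        rw [add_lie]
        exact Submodule.add_mem _ hu hv
      | mem i x hx =>
        by_cases hi : i ∈ Finset.range c
        swap
        · have hx0 : x = 0 := by simpa [hi] using hx
          simp [hx0]
        rw [iSup_pos hi] at hx
        obtain ⟨a, ha, rfl⟩ := (Submodule.mem_smul_pointwise_iff_exists _ _ _).1 hx
        have hag := lie_mem_leftIter hsmul I L j i a ha g hg
        by_cases hk : i + j + 1 < c
        · refine (Submodule.mem_smul_pointwise_iff_exists _ _ _).2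
            ⟨((p : ℚ_[p]) ^ (i + j + 1))⁻¹ • ⁅a, g⁆, ?_, ?_⟩
          · exact Submodule.mem_iSup_of_mem (i + j + 1)
              (Submodule.mem_iSup_of_mem (Finset.mem_range.2 hk)
                (Submodule.smul_mem_pointwise_smul _ _ _ hag))
          · rw [hcoe, smul_lie, lie_smul, smul_smul, smul_smul]
            congr 1
            push_cast
            field_simp
            ring
        · have h0 : ⁅a, g⁆ = 0 := by
            have := leftIter_le_gammaS hIL _ hag
            rwa [gammaS_eq_bot hnil (not_lt.1 hk), Submodule.mem_bot] at this
          simp [smul_lie, lie_smul, h0]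
  refine ⟨main, ?_, fun x hx y hy => ?_⟩
  · refine iSup₂_mono fun i _ x hx => ?_
    obtain ⟨a, ha, rfl⟩ := (Submodule.mem_smul_pointwise_iff_exists _ _ _).1 hx
    exact Submodule.smul_mem_pointwise_smul _ _ _ (leftIter_le_gammaS hIL i ha)
  · rw [← lie_skew]
    exact Submodule.neg_mem _ (hpI (main y hy x hx))
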